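/- arXiv:1412.2572 — 2 statements merged into one kernel-verified Lean document; each statement's English description precedes it below -/
import Mathlib

section
/- Let S be a nonempty finite set (the external labels carried by a single particle), let t : S → ℝ assign a time to each label, let c : S → S → ℝ be arbitrary coefficients, and let g : ℝ → ℝ → ℝ be a retarded propagator component, i.e. g a b = 0 whenever a ≤ b. Then the product over all s in S of the sums ∑_{s' ∈ S} c s' s · g (t s') (t s) equals zero. (This is the paper's Theorem 1: if a particle carries only B-field external labels, the corresponding term vanishes, since each b-factor of the particle has exactly this form with c s' s = k_{s'}·k_s and g = g_{qp}.) -/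
/-- **Theorem 1 of the paper.** If a particle carries only `B`-field external labels,
the corresponding term vanishes: for a nonempty finite set `S` of labels with times
`t`, arbitrary coefficients `c`, and a retarded propagator component `g`
(`g a b = 0` whenever `a ≤ b`), the product over all labels `s ∈ S` of the factors
`∑ s' ∈ S, c s' s * g (t s') (t s)` is zero. -/
theorem product_of_b_factors_vanishes
    {S : Type*} [Fintype S] [Nonempty S]
    (t : S → ℝ) (c : S → S → ℝ) (g : ℝ → ℝ → ℝ)
    (hg : ∀ a b : ℝ, a ≤ b → g a b = 0) :
    ∏ s : S, (∑ s' : S, c s' s * g (t s') (t s)) = 0 := by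
  -- At a label with the latest time, every term of its factor vanishes by retardation.
  obtain ⟨m, hm⟩ := Finite.exists_max t
  refine Finset.prod_eq_zero (Finset.mem_univ m) (Finset.sum_eq_zero fun s' _ => ?_)
  rw [hg _ _ (hm s'), mul_zero]
end

section
/- Let L be a finite set of labels with times t : L → ℝ, let P be a nonempty finite set of particles, let A assign to each particle p in P a nonempty finite subset A(p) ⊆ L of labels, let c : L → L → ℝ be arbitrary coefficients, and let g : ℝ → ℝ → ℝ satisfy g a b = 0 whenever a ≤ b. Then the full product over all particles p in P and all labels s in A(p) of the sums ∑_{s' ∈ A(p)} c s' s · g (t s') (t s) equals zero. (This is the term-level content of the paper's Corollary 1: any non-interacting B-field-only cumulant vanishes, since in every contributing term each particle carries only B-field labels.) -/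
/-! Some particle carries a nonempty finite label set, so it has a label `s` of latest time. Every
propagator `g (t s') (t s)` in the factor of `s` then has `t s' ≤ t s` and vanishes by retardation
(including `s' = s`, the equal-time case), so that one factor kills the product. -/

/-- **Corollary 1 of the paper (term level).** Any non-interacting `B`-field-only
cumulant vanishes: for a finite label set `L` with times `t`, a nonempty finite set
`P` of particles each carrying a nonempty label set `A p ⊆ L`, arbitrary coefficients
`c`, and a retarded propagator component `g` (`g a b = 0` whenever `a ≤ b`), the full
product over all particles `p` and all labels `s ∈ A p` of the factors
`∑ s' ∈ A p, c s' s * g (t s') (t s)` is zero. -/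
theorem b_field_only_cumulant_term_vanishes
    {L P : Type*} [Fintype L] [Fintype P] [Nonempty P]
    (t : L → ℝ) (A : P → Finset L) (hA : ∀ p : P, (A p).Nonempty)
    (c : L → L → ℝ) (g : ℝ → ℝ → ℝ)
    (hg : ∀ a b : ℝ, a ≤ b → g a b = 0) :
    ∏ p : P, ∏ s ∈ A p, (∑ s' ∈ A p, c s' s * g (t s') (t s)) = 0 := by
  obtain ⟨p⟩ := ‹Nonempty P›
  obtain ⟨s, hs, hmax⟩ := (A p).exists_max_image t (hA p)
  refine Finset.prod_eq_zero (Finset.mem_univ p) (Finset.prod_eq_zero hs ?_)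
  refine Finset.sum_eq_zero fun s' hs' => ?_
  rw [hg _ _ (hmax s' hs'), mul_zero]
end
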